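/- arXiv:2204.09887 — 2 statements merged into one kernel-verified Lean document; each statement's English description precedes it below -/
import Mathlib

section
/- For every s ∈ ℂ with Re(s) > 0, Σ_{n=1}^∞ τ(n) e^{−s√n} = 2^{36} π^{23/2} Γ(25/2) Σ_{n=1}^∞ s·τ(n)/(s² + 16π²n)^{25/2}. -/
open scoped Real

/-- Principal branch complex square root. -/
noncomputable def csqrt (z : ℂ) : ℂ := z ^ ((1 : ℂ)/2)

/-- `IsRamanujanTau τ` states that `τ` (indexed by `n ≥ 1`) satisfies the defining product
expansion `q ∏ (1 - q^m)^24 = ∑ τ(n) q^n` for `|q| < 1`. -/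
def IsRamanujanTau (τ : ℕ → ℂ) : Prop :=
  ∀ q : ℂ, ‖q‖ < 1 → ∑' n : ℕ, τ (n + 1) * q ^ (n + 1) = q * ∏' m : ℕ, (1 - q ^ (m + 1)) ^ 24

open Set MeasureTheory Filter Topology UpperHalfPlane
open scoped MatrixGroups

/-- The integral of `exp (-(a² x² + b² / x²))` over the positive half-line, computed by
the substitution `y = a x - b / x`. -/
theorem integral_exp_neg_sq_sub_div_sq {a b : ℝ} (ha : 0 < a) (hb : 0 < b) :
    IntegrableOn (fun x : ℝ => Real.exp (-(a ^ 2 * x ^ 2 + b ^ 2 / x ^ 2))) (Ioi 0) ∧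
    ∫ x in Ioi (0 : ℝ), Real.exp (-(a ^ 2 * x ^ 2 + b ^ 2 / x ^ 2)) =
      √π / (2 * a) * Real.exp (-(2 * a * b)) := by
  have hder : ∀ x ∈ Ioi (0 : ℝ),
      HasDerivWithinAt (fun x => a * x - b / x) (a + b / x ^ 2) (Ioi 0) x := by
    intro x hx
    have hx' : x ≠ 0 := (ne_of_gt hx)
    have := ((hasDerivAt_id x).const_mul a).sub ((hasDerivAt_inv hx').const_mul b)
    refine (this.congr_deriv ?_).hasDerivWithinAt
    field_simp
    ring
  have hinj : InjOn (fun x : ℝ => a * x - b / x) (Ioi 0) := by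
    intro x hx y hy hxy
    rw [mem_Ioi] at hx hy
    simp only at hxy
    field_simp at hxy
    have : (x - y) * (a * x * y + b) = 0 := by linear_combination hxy
    rcases mul_eq_zero.1 this with h | h
    · linarith
    · have : 0 < a * x * y + b := by positivity
      linarith
  have himg : (fun x : ℝ => a * x - b / x) '' Ioi 0 = univ := by
    refine eq_univ_of_forall fun y => ?_
    have hlt : |y| < √(y ^ 2 + 4 * a * b) := by
      rw [← Real.sqrt_sq_eq_abs]
      exact Real.sqrt_lt_sqrt (sq_nonneg _) (by nlinarith [mul_pos ha hb])
    have hsq : √(y ^ 2 + 4 * a * b) ^ 2 = y ^ 2 + 4 * a * b := Real.sq_sqrt (by positivity)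
    set w := √(y ^ 2 + 4 * a * b)
    have hpos : 0 < y + w := by linarith [neg_abs_le y]
    refine ⟨(y + w) / (2 * a), ?_, ?_⟩
    · rw [mem_Ioi]; positivity
    · have hne := hpos.ne'
      simp only
      field_simp
      linear_combination hsq
  have hder' : ∀ x ∈ Ioi (0 : ℝ),
      HasDerivWithinAt (fun x => b / a / x) (-(b / a / x ^ 2)) (Ioi 0) x := by
    intro x hx
    have hx' : x ≠ 0 := (ne_of_gt hx)
    refine (((hasDerivAt_inv hx').const_mul (b / a)).congr_deriv ?_).hasDerivWithinAt
    field_simp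
  have hinj' : InjOn (fun x : ℝ => b / a / x) (Ioi 0) := by
    intro x hx y hy hxy
    rw [mem_Ioi] at hx hy
    simp only at hxy
    field_simp at hxy
    exact hxy.symm
  have himg' : (fun x : ℝ => b / a / x) '' Ioi 0 = Ioi 0 := by
    ext y
    constructor
    · rintro ⟨x, hx, rfl⟩
      rw [mem_Ioi] at hx
      simp only [mem_Ioi]
      positivity
    · intro hy
      rw [mem_Ioi] at hy
      refine ⟨b / a / y, by rw [mem_Ioi]; positivity, ?_⟩
      simp only
      field_simp
  set g : ℝ → ℝ := fun x => Real.exp (-(a * x - b / x) ^ 2) with hg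
  have hint : IntegrableOn (fun x => |a + b / x ^ 2| • g x) (Ioi 0) := by
    have := integrableOn_image_iff_integrableOn_abs_deriv_smul measurableSet_Ioi hder hinj
      (fun y => Real.exp (-y ^ 2))
    rw [himg, integrableOn_univ] at this
    exact this.1 (by simpa using integrable_exp_neg_mul_sq one_pos)
  have hval : ∫ x in Ioi (0 : ℝ), |a + b / x ^ 2| • g x = √π := by
    have := integral_image_eq_integral_abs_deriv_smul measurableSet_Ioi hder hinj
      (fun y => Real.exp (-y ^ 2))
    rw [himg, setIntegral_univ] at this
    rw [← this]
    simpa using integral_gaussian 1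
  have hgm : AEStronglyMeasurable g (volume.restrict (Ioi 0)) := by
    apply Measurable.aestronglyMeasurable
    fun_prop
  have hgint : IntegrableOn g (Ioi 0) := by
    refine Integrable.mono' (hint.const_mul a⁻¹) hgm ?_
    filter_upwards [ae_restrict_mem measurableSet_Ioi] with x hx
    rw [mem_Ioi] at hx
    have h1 : 0 < g x := Real.exp_pos _
    rw [Real.norm_of_nonneg h1.le, abs_of_pos (by positivity), smul_eq_mul, ← mul_assoc]
    refine le_mul_of_one_le_left h1.le ?_
    rw [mul_add, inv_mul_cancel₀ ha.ne']
    have : 0 ≤ a⁻¹ * (b / x ^ 2) := by positivity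
    linarith
  have hrefl : ∫ x in Ioi (0 : ℝ), b / x ^ 2 * g x = ∫ x in Ioi (0 : ℝ), a * g x := by
    have := integral_image_eq_integral_abs_deriv_smul measurableSet_Ioi hder' hinj'
      (fun y => a * g y)
    rw [himg'] at this
    rw [this]
    refine setIntegral_congr_fun measurableSet_Ioi fun x hx => ?_
    rw [mem_Ioi] at hx
    have : g (b / a / x) = g x := by
      simp only [hg]
      congr 2
      field_simp
      ring
    simp only [this, abs_neg, smul_eq_mul]
    rw [abs_of_pos (by positivity)]
    field_simp
  have hint2 : IntegrableOn (fun x => b / x ^ 2 * g x) (Ioi 0) := by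
    refine (hint.sub (hgint.const_mul a)).congr ?_
    filter_upwards [ae_restrict_mem measurableSet_Ioi] with x hx
    rw [mem_Ioi] at hx
    simp only [Pi.sub_apply, smul_eq_mul]
    rw [abs_of_pos (by positivity)]
    ring
  have hgval : ∫ x in Ioi (0 : ℝ), g x = √π / (2 * a) := by
    have h1 : ∫ x in Ioi (0 : ℝ), |a + b / x ^ 2| • g x =
        (∫ x in Ioi (0 : ℝ), a * g x) + ∫ x in Ioi (0 : ℝ), b / x ^ 2 * g x := by
      rw [← integral_add (hgint.const_mul a) hint2]
      refine setIntegral_congr_fun measurableSet_Ioi fun x hx => ?_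
      rw [mem_Ioi] at hx
      simp only [smul_eq_mul]
      rw [abs_of_pos (by positivity)]
      ring
    rw [hval, hrefl, integral_const_mul] at h1
    rw [h1]
    field_simp
    ring
  have hcongr : EqOn (fun x => g x * Real.exp (-(2 * a * b)))
      (fun x : ℝ => Real.exp (-(a ^ 2 * x ^ 2 + b ^ 2 / x ^ 2))) (Ioi 0) := by
    intro x hx
    have hx' : x ≠ 0 := (ne_of_gt hx)
    simp only [hg]
    rw [← Real.exp_add]
    congr 1
    field_simp
    ring
  constructor
  · exact (integrableOn_congr_fun hcongr measurableSet_Ioi).1 (hgint.mul_const _)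
  · rw [← setIntegral_congr_fun measurableSet_Ioi hcongr, integral_mul_const, hgval]

theorem ModularForm.discriminant_eq_tprod (z : ℍ) :
    ModularForm.discriminant z = Function.Periodic.qParam 1 z *
      ∏' m : ℕ, (1 - Function.Periodic.qParam 1 z ^ (m + 1)) ^ 24 := by
  rw [ModularForm.discriminant_eq_q_prod]

theorem IsRamanujanTau.hasSum_discriminant {τ : ℕ → ℂ} (hτ : IsRamanujanTau τ) (z : ℍ) :
    HasSum (fun n : ℕ => τ (n + 1) * Function.Periodic.qParam 1 z ^ (n + 1))
      (ModularForm.discriminant z) := by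
  have hz : ‖Function.Periodic.qParam 1 (z : ℂ)‖ < 1 := by
    simpa using UpperHalfPlane.norm_qParam_lt_one 1 z
  have h := hτ _ hz
  rw [← ModularForm.discriminant_eq_tprod] at h
  have hs : Summable fun n : ℕ => τ (n + 1) * Function.Periodic.qParam 1 z ^ (n + 1) := by
    by_contra hs
    rw [tsum_eq_zero_of_not_summable hs] at h
    exact ModularForm.discriminant_ne_zero z h.symm
  exact h ▸ hs.hasSum

theorem IsRamanujanTau.isBigO {τ : ℕ → ℂ} (hτ : IsRamanujanTau τ) :
    (fun n : ℕ => τ (n + 1)) =O[atTop] fun n : ℕ => ((n : ℝ) + 1) ^ 6 := by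
  have hcoeff (n : ℕ) :
      τ (n + 1) = (qExpansion 1 CuspForm.discriminant).coeff (n + 1) := by
    have := ModularFormClass.qExpansion_coeff_unique (c := fun m => if m = 0 then 0 else τ m)
      (f := CuspForm.discriminant) one_pos one_mem_strictPeriods_SL (fun z => by
        have h := hτ.hasSum_discriminant z
        rw [← hasSum_nat_add_iff' 1]
        simpa using h) (n + 1)
    simpa using this
  have h := CuspFormClass.qExpansion_isBigO CuspForm.discriminant
  rw [Subgroup.strictWidthInfty_SL2Z] at h
  simp_rw [hcoeff]
  refine (h.comp_tendsto (tendsto_add_atTop_nat 1)).congr_right fun n => ?_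
  norm_num [Function.comp_def]

theorem IsRamanujanTau.exists_norm_le {τ : ℕ → ℂ} (hτ : IsRamanujanTau τ) :
    ∃ C : ℝ, ∀ n : ℕ, ‖τ (n + 1)‖ ≤ C * ((n : ℝ) + 1) ^ 6 := by
  obtain ⟨C, hC⟩ := Asymptotics.bound_of_isBigO_nat_atTop hτ.isBigO |>.imp fun _ h => h.2
  refine ⟨C, fun n => ?_⟩
  have := hC (x := n) (by positivity)
  rwa [Real.norm_of_nonneg (by positivity)] at this

theorem discriminant_S_smul (z : ℍ) :
    ModularForm.discriminant (ModularGroup.S • z) = (z : ℂ) ^ 12 * ModularForm.discriminant z := by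
  have h := congrFun ModularForm.discriminant_S_invariant z
  rw [ModularForm.SL_slash_apply, ModularGroup.denom_S, zpow_neg, ← div_eq_mul_inv,
    div_eq_iff (zpow_ne_zero _ z.ne_zero)] at h
  rw [h, mul_comm]
  norm_cast

/-- The modularity of `Δ` on the imaginary axis, as an identity of series. -/
theorem IsRamanujanTau.tsum_exp {τ : ℕ → ℂ} (hτ : IsRamanujanTau τ) {x : ℝ} (hx : 0 < x) :
    ∑' n : ℕ, τ (n + 1) * Complex.exp (-(((n : ℂ) + 1) / x ^ 2)) =
      (2 * π * x ^ 2) ^ 12 *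
        ∑' n : ℕ, τ (n + 1) * Complex.exp (-(4 * π ^ 2 * ((n : ℂ) + 1) * x ^ 2)) := by
  let z : ℍ := ⟨Complex.I * ((2 * π * x ^ 2 : ℝ) : ℂ), by
    rw [Complex.im_mul_ofReal, Complex.I_im]; positivity⟩
  have hz : (z : ℂ) = Complex.I * ((2 * π * x ^ 2 : ℝ) : ℂ) := rfl
  have hx' : (x : ℂ) ≠ 0 := by exact_mod_cast hx.ne'
  have hπ : (π : ℂ) ≠ 0 := by exact_mod_cast Real.pi_ne_zero
  have h := discriminant_S_smul z
  rw [← (hτ.hasSum_discriminant z).tsum_eq,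
    ← (hτ.hasSum_discriminant (ModularGroup.S • z)).tsum_eq, hz, mul_pow,
    show Complex.I ^ 12 = 1 by rw [show 12 = 4 * 3 by rfl, pow_mul, Complex.I_pow_four, one_pow],
    one_mul, UpperHalfPlane.modular_S_smul] at h
  push_cast at h
  convert h using 4 with n n
  · simp only [Function.Periodic.qParam, ← Complex.exp_nat_mul, hz]
    congr 1
    push_cast
    field_simp
  · congr 1
    simp only [Function.Periodic.qParam, ← Complex.exp_nat_mul]
    congr 1
    push_cast
    linear_combination -(4 * π ^ 2 * ((n : ℂ) + 1) * x ^ 2) * Complex.I_sq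

theorem exp_neg_mul_sqrt_le {s y : ℝ} (hs : 0 < s) (hy : 0 < y) :
    Real.exp (-(s * √y)) ≤ (Nat.factorial 16 / s ^ 16) * (y ^ 8)⁻¹ := by
  have h := Real.pow_div_factorial_le_exp (x := s * √y) (by positivity) 16
  rw [Real.exp_neg]
  have h8 : (√y) ^ 16 = y ^ 8 := by
    rw [show 16 = 2 * 8 by rfl, pow_mul, Real.sq_sqrt hy.le]
  rw [mul_pow, h8] at h
  calc (Real.exp (s * √y))⁻¹ ≤ (s ^ 16 * y ^ 8 / Nat.factorial 16)⁻¹ :=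
        inv_anti₀ (by positivity) h
    _ = _ := by field_simp

theorem summable_mul_pow_six_mul_inv_pow_eight (C : ℝ) :
    Summable fun n : ℕ => C * (((n : ℝ) + 1) ^ 6 * (((n : ℝ) + 1) ^ 8)⁻¹) := by
  refine Summable.mul_left C ?_
  have h := (summable_nat_add_iff 1).2 (Real.summable_nat_pow_inv.2 one_lt_two)
  refine h.congr fun n => ?_
  push_cast
  field_simp

theorem le_norm_sq_add {s : ℂ} {ε R c : ℝ} (hε : 0 < ε) (hs : ε ≤ s.re) (hR : ‖s‖ ≤ R)
    (hc : 1 ≤ c) : c / (1 + R ^ 2 / ε) ≤ ‖s ^ 2 + c‖ := by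
  have h1 : ε ≤ ‖s ^ 2 + c‖ := by
    refine (sq_le_sq₀ hε.le (norm_nonneg _)).1 ?_
    have hre : (s ^ 2 + c).re = s.re ^ 2 - s.im ^ 2 + c := by simp [sq]
    have him : (s ^ 2 + c).im = 2 * s.re * s.im := by simp [sq]; ring
    rw [Complex.sq_norm, Complex.normSq_apply, hre, him]
    have hsq : ε ^ 2 ≤ s.re ^ 2 := by gcongr
    nlinarith [sq_nonneg (s.im ^ 2 - c), sq_nonneg (s.re ^ 2), sq_nonneg (s.re * s.im),
      mul_le_mul_of_nonneg_left hc (sq_nonneg s.re)]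
  have h2 : c ≤ ‖s ^ 2 + c‖ + R ^ 2 := by
    calc c = ‖(c : ℂ)‖ := by rw [Complex.norm_real, Real.norm_of_nonneg (by linarith)]
      _ = ‖(s ^ 2 + c) - s ^ 2‖ := by ring_nf
      _ ≤ ‖s ^ 2 + c‖ + ‖s ^ 2‖ := norm_sub_le _ _
      _ ≤ _ := by rw [norm_pow]; gcongr
  rw [div_le_iff₀ (by positivity)]
  have h3 : R ^ 2 ≤ ‖s ^ 2 + c‖ * (R ^ 2 / ε) := by
    rw [← mul_div_assoc, le_div_iff₀ hε, mul_comm]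
    gcongr
  linarith

theorem sq_add_mem_slitPlane {s : ℂ} (hs : 0 < s.re) {c : ℝ} (hc : 0 < c) :
    s ^ 2 + c ∈ Complex.slitPlane := by
  rw [Complex.mem_slitPlane_iff]
  by_cases h : s.im = 0
  · left
    simp [sq, h]
    positivity
  · right
    simp [sq]
    grind

theorem differentiableOn_tsum_of_local_bound {F : ℕ → ℂ → ℂ}
    (hF : ∀ n, DifferentiableOn ℂ (F n) {s | 0 < s.re})
    (hb : ∀ ε R : ℝ, 0 < ε → 0 < R → ∃ u : ℕ → ℝ, Summable u ∧
      ∀ n s, ε < s.re → ‖s‖ < R → ‖F n s‖ ≤ u n) :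
    DifferentiableOn ℂ (fun s => ∑' n, F n s) {s | 0 < s.re} := by
  intro s hs
  change 0 < s.re at hs
  obtain ⟨u, hu, hle⟩ := hb (s.re / 2) (‖s‖ + 1) (by positivity) (by positivity)
  have hU : IsOpen {w : ℂ | s.re / 2 < w.re ∧ ‖w‖ < ‖s‖ + 1} :=
    (isOpen_lt continuous_const Complex.continuous_re).inter
      (isOpen_lt continuous_norm continuous_const)
  refine DifferentiableAt.differentiableWithinAt ?_
  refine (Complex.differentiableOn_tsum_of_summable_norm hu (fun n => (hF n).mono ?_) hU
    (fun n w hw => hle n w hw.1 hw.2)).differentiableAt (hU.mem_nhds ⟨by linarith, by linarith⟩)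
  intro w hw
  have := hw.1
  change 0 < w.re
  linarith

theorem eqOn_re_pos_of_eq_ofReal {f g : ℂ → ℂ} (hf : DifferentiableOn ℂ f {s | 0 < s.re})
    (hg : DifferentiableOn ℂ g {s | 0 < s.re}) (h : ∀ t : ℝ, 0 < t → f t = g t) :
    EqOn f g {s | 0 < s.re} := by
  have hU : IsOpen {s : ℂ | 0 < s.re} := isOpen_lt continuous_const Complex.continuous_re
  refine (hf.analyticOnNhd hU).eqOn_of_preconnected_of_frequently_eq (hg.analyticOnNhd hU)
    (convex_halfSpace_re_gt 0).isPreconnected (z₀ := ((1 : ℝ) : ℂ)) (by simp) ?_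
  have ht : Tendsto (fun t : ℝ => (t : ℂ)) (𝓝[≠] 1) (𝓝[≠] ((1 : ℝ) : ℂ)) :=
    (Complex.continuous_ofReal.tendsto 1).inf
      (tendsto_principal_principal.2 fun t ht => by simpa using ht)
  refine ht.frequently (Eventually.frequently ?_)
  filter_upwards [nhdsWithin_le_nhds (lt_mem_nhds one_pos)] with t ht using h t ht

theorem csqrt_natCast_add_one (n : ℕ) : csqrt ((n : ℂ) + 1) = (√((n : ℝ) + 1) : ℝ) := by
  rw [csqrt, Real.sqrt_eq_rpow, Complex.ofReal_cpow (by positivity)]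
  push_cast
  rfl

theorem integral_pow_mul_exp_neg_mul_sq {b : ℝ} (hb : 0 < b) :
    IntegrableOn (fun x : ℝ => x ^ 24 * Real.exp (-(b * x ^ 2))) (Ioi 0) ∧
    ∫ x in Ioi (0 : ℝ), x ^ 24 * Real.exp (-(b * x ^ 2)) =
      b ^ (-(25 / 2) : ℝ) / 2 * Real.Gamma (25 / 2) := by
  have h1 := integrable_rpow_mul_exp_neg_mul_sq hb (s := 24) (by norm_num)
  have h2 := integral_rpow_mul_exp_neg_mul_rpow (p := 2) (q := 24) two_pos (by norm_num) hb
  norm_num at h1 h2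
  constructor
  · exact_mod_cast h1.integrableOn
  · rw [h2, mul_one_div]

theorem rpow_neg_le_inv_pow_eight {y b : ℝ} (hy : 1 ≤ y) (hb : y ≤ b) :
    b ^ (-(25 / 2) : ℝ) ≤ (y ^ 8)⁻¹ := by
  rw [Real.rpow_neg (by linarith)]
  refine inv_anti₀ (by positivity) ?_
  calc y ^ 8 ≤ b ^ 8 := by gcongr
    _ = b ^ (8 : ℝ) := by norm_cast
    _ ≤ b ^ (25 / 2 : ℝ) := Real.rpow_le_rpow_of_exponent_le (by linarith) (by norm_num)

/-- Termwise integration of the modularity relation against `exp (-(s / 2) ^ 2 * x ^ 2)`. -/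
theorem IsRamanujanTau.tsum_exp_neg_mul_sqrt {τ : ℕ → ℂ} (hτ : IsRamanujanTau τ) {s : ℝ}
    (hs : 0 < s) :
    ∑' n : ℕ, τ (n + 1) * (√π / s * Real.exp (-(s * √((n : ℝ) + 1))) : ℝ) =
      ∑' n : ℕ, (2 * π) ^ 12 * τ (n + 1) *
        ((((s / 2) ^ 2 + 4 * π ^ 2 * ((n : ℝ) + 1)) ^ (-(25 / 2) : ℝ) / 2 *
          Real.Gamma (25 / 2) : ℝ) : ℂ) := by
  obtain ⟨C, hC⟩ := hτ.exists_norm_le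
  have hm (n : ℕ) : (0 : ℝ) < (n : ℝ) + 1 := by positivity
  let f : ℕ → ℝ → ℝ := fun n x => Real.exp (-((s / 2) ^ 2 * x ^ 2 + √((n : ℝ) + 1) ^ 2 / x ^ 2))
  let g : ℕ → ℝ → ℝ := fun n x =>
    x ^ 24 * Real.exp (-(((s / 2) ^ 2 + 4 * π ^ 2 * ((n : ℝ) + 1)) * x ^ 2))
  have hf (n : ℕ) := integral_exp_neg_sq_sub_div_sq (half_pos hs) (Real.sqrt_pos.2 (hm n))
  have hfval (n : ℕ) : ∫ x in Ioi (0 : ℝ), f n x = √π / s * Real.exp (-(s * √((n : ℝ) + 1))) := by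
    rw [(hf n).2]
    ring_nf
  have hg (n : ℕ) := integral_pow_mul_exp_neg_mul_sq
    (b := (s / 2) ^ 2 + 4 * π ^ 2 * ((n : ℝ) + 1)) (by positivity)
  have hgval (n : ℕ) : ∫ x in Ioi (0 : ℝ), g n x =
      ((s / 2) ^ 2 + 4 * π ^ 2 * ((n : ℝ) + 1)) ^ (-(25 / 2) : ℝ) / 2 * Real.Gamma (25 / 2) :=
    (hg n).2
  have hnorm (h : ℕ → ℝ → ℝ) (hh : ∀ n, ∀ x ∈ Ioi (0 : ℝ), 0 ≤ h n x) (c : ℕ → ℂ) (n : ℕ) :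
      ∫ x in Ioi (0 : ℝ), ‖c n * (h n x : ℂ)‖ = ‖c n‖ * ∫ x in Ioi (0 : ℝ), h n x := by
    rw [← integral_const_mul]
    refine setIntegral_congr_fun measurableSet_Ioi fun x hx => ?_
    simp only [norm_mul, Complex.norm_real]
    rw [Real.norm_of_nonneg (hh n x hx)]
  have hF := hasSum_integral_of_summable_integral_norm (μ := volume.restrict (Ioi (0 : ℝ)))
    (F := fun n x => τ (n + 1) * (f n x : ℂ)) (fun n => (hf n).1.ofReal.const_mul _) (by
      simp_rw [hnorm f (fun n x _ => (Real.exp_pos _).le) (fun n => τ (n + 1)), hfval]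
      refine (summable_mul_pow_six_mul_inv_pow_eight
        (C * (√π / s * (Nat.factorial 16 / s ^ 16)))).of_nonneg_of_le
          (fun n => by positivity) fun n => ?_
      calc _ ≤ (C * ((n : ℝ) + 1) ^ 6) *
            (√π / s * ((Nat.factorial 16 / s ^ 16) * (((n : ℝ) + 1) ^ 8)⁻¹)) := by
            gcongr
            · exact (norm_nonneg _).trans (hC n)
            · exact hC n
            · exact exp_neg_mul_sqrt_le hs (hm n)
        _ = _ := by ring)
  have hG := hasSum_integral_of_summable_integral_norm (μ := volume.restrict (Ioi (0 : ℝ)))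
    (F := fun n x => (2 * π) ^ 12 * τ (n + 1) * (g n x : ℂ))
    (fun n => (hg n).1.ofReal.const_mul _) (by
      simp_rw [hnorm g (fun n x _ => by positivity) (fun n => (2 * π) ^ 12 * τ (n + 1)),
        hgval]
      refine (summable_mul_pow_six_mul_inv_pow_eight
        (‖((2 * π) ^ 12 : ℂ)‖ * C * (1 / 2 * Real.Gamma (25 / 2)))).of_nonneg_of_le
          (fun n => by positivity) fun n => ?_
      have hy : (n : ℝ) + 1 ≤ (s / 2) ^ 2 + 4 * π ^ 2 * ((n : ℝ) + 1) := by
        nlinarith [sq_nonneg (s / 2), Real.pi_gt_three, hm n,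
          mul_pos (hm n) (show 0 < 4 * π ^ 2 - 1 by nlinarith [Real.pi_gt_three])]
      rw [norm_mul]
      calc _ ≤ (‖((2 * π) ^ 12 : ℂ)‖ * (C * ((n : ℝ) + 1) ^ 6)) *
            ((((n : ℝ) + 1) ^ 8)⁻¹ / 2 * Real.Gamma (25 / 2)) := by
            gcongr
            · exact mul_nonneg (norm_nonneg _) ((norm_nonneg _).trans (hC n))
            · exact hC n
            · exact rpow_neg_le_inv_pow_eight (by simp) hy
        _ = _ := by ring)
  have hpt : EqOn (fun x => ∑' n, τ (n + 1) * (f n x : ℂ))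
      (fun x => ∑' n, (2 * π) ^ 12 * τ (n + 1) * (g n x : ℂ)) (Ioi 0) := by
    intro x hx
    have h := congrArg (Complex.exp (-((s / 2) ^ 2 * x ^ 2)) * ·) (hτ.tsum_exp hx)
    simp only [← tsum_mul_left] at h
    refine (tsum_congr fun n => ?_).trans (h.trans (tsum_congr fun n => ?_))
    · rw [mul_left_comm, ← Complex.exp_add]
      simp only [f, Real.sq_sqrt (hm n).le]
      push_cast
      ring_nf
    · simp only [g]
      rw [show -((((s / 2) ^ 2 + 4 * π ^ 2 * ((n : ℝ) + 1)) * x ^ 2 : ℝ)) =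
        -((s / 2) ^ 2 * x ^ 2) + -(4 * π ^ 2 * ((n : ℝ) + 1) * x ^ 2) by ring, Complex.ofReal_mul, Complex.ofReal_exp]
      push_cast
      rw [Complex.exp_add]
      ring
  have := hF.tsum_eq.trans ((setIntegral_congr_fun measurableSet_Ioi hpt).trans hG.tsum_eq.symm)
  simp_rw [integral_const_mul, integral_complex_ofReal, hfval, hgval] at this
  exact this

theorem IsRamanujanTau.tsum_eq_of_pos {τ : ℕ → ℂ} (hτ : IsRamanujanTau τ) {s : ℝ} (hs : 0 < s) :
    ∑' n : ℕ, τ (n + 1) * Complex.exp (-s * csqrt ((n : ℂ) + 1))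
      = 2 ^ 36 * (π : ℂ) ^ ((23 : ℂ)/2) * Complex.Gamma (25/2) *
        ∑' n : ℕ, s * τ (n + 1) / ((s : ℂ)^2 + 16 * (π : ℂ)^2 * ((n : ℂ) + 1)) ^ ((25 : ℂ)/2) := by
  have h := congrArg (((s / √π : ℝ) : ℂ) * ·) (hτ.tsum_exp_neg_mul_sqrt hs)
  simp only [← tsum_mul_left] at h
  rw [← tsum_mul_left]
  refine (tsum_congr fun n => ?_).trans (h.trans (tsum_congr fun n => ?_))
  · symm
    rw [mul_left_comm]
    congr 1
    rw [csqrt_natCast_add_one, ← Complex.ofReal_mul, ← mul_assoc, div_mul_div_cancel₀ (by positivity),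
      div_self hs.ne', one_mul]
    push_cast
    ring_nf
  · set b : ℝ := (s / 2) ^ 2 + 4 * π ^ 2 * ((n : ℝ) + 1) with hb
    have hb0 : 0 < b := by positivity
    have h1 : ((s : ℂ)^2 + 16 * (π : ℂ)^2 * ((n : ℂ) + 1)) ^ ((25 : ℂ)/2) =
        ((2 ^ 25 * b ^ (25 / 2 : ℝ) : ℝ) : ℂ) := by
      have h4 : (2 : ℝ) ^ 25 = 4 ^ (25 / 2 : ℝ) := by
        rw [show (4 : ℝ) = 2 ^ (2 : ℝ) by norm_num, ← Real.rpow_mul (by norm_num),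
          ← Real.rpow_natCast]
        norm_num
      rw [h4, ← Real.mul_rpow (by norm_num) hb0.le, Complex.ofReal_cpow (by positivity), hb]
      push_cast
      ring_nf
    have h2 : (π : ℂ) ^ ((23 : ℂ)/2) = ((π ^ 12 / √π : ℝ) : ℂ) := by
      rw [Real.sqrt_eq_rpow, ← Real.rpow_natCast, ← Real.rpow_sub Real.pi_pos,
        Complex.ofReal_cpow Real.pi_pos.le]
      norm_num
    have h3 : Complex.Gamma (25 / 2) = ((Real.Gamma (25 / 2) : ℝ) : ℂ) := by
      rw [← Complex.Gamma_ofReal]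
      norm_num
    rw [h1, h2, h3, Real.rpow_neg hb0.le]
    have h5 : ((b ^ (25 / 2 : ℝ) : ℝ) : ℂ) ≠ 0 := by exact_mod_cast (by positivity)
    have h6 : ((√π : ℝ) : ℂ) ≠ 0 := by exact_mod_cast (by positivity)
    push_cast
    field_simp

theorem IsRamanujanTau.differentiableOn_tsum_exp {τ : ℕ → ℂ} (hτ : IsRamanujanTau τ) :
    DifferentiableOn ℂ (fun s => ∑' n : ℕ, τ (n + 1) * Complex.exp (-s * csqrt ((n : ℂ) + 1)))
      {s | 0 < s.re} := by
  obtain ⟨C, hC⟩ := hτ.exists_norm_le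
  refine differentiableOn_tsum_of_local_bound (fun n => by fun_prop) fun ε R hε _ =>
    ⟨_, summable_mul_pow_six_mul_inv_pow_eight (C * (Nat.factorial 16 / ε ^ 16)),
      fun n s hs _ => ?_⟩
  rw [norm_mul, Complex.norm_exp, csqrt_natCast_add_one, Complex.re_mul_ofReal, Complex.neg_re, neg_mul]
  calc _ ≤ (C * ((n : ℝ) + 1) ^ 6) * ((Nat.factorial 16 / ε ^ 16) * (((n : ℝ) + 1) ^ 8)⁻¹) := by
        gcongr
        · exact (norm_nonneg _).trans (hC n)
        · exact hC n
        · refine le_trans ?_ (exp_neg_mul_sqrt_le hε (by positivity))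
          gcongr
    _ = _ := by ring

theorem IsRamanujanTau.differentiableOn_tsum_cpow {τ : ℕ → ℂ} (hτ : IsRamanujanTau τ) :
    DifferentiableOn ℂ (fun s : ℂ => ∑' n : ℕ,
      s * τ (n + 1) / (s ^ 2 + 16 * (π : ℂ) ^ 2 * ((n : ℂ) + 1)) ^ ((25 : ℂ) / 2))
      {s | 0 < s.re} := by
  obtain ⟨C, hC⟩ := hτ.exists_norm_le
  have hcast (n : ℕ) : 16 * (π : ℂ) ^ 2 * ((n : ℂ) + 1) =
      ((16 * π ^ 2 * ((n : ℝ) + 1) : ℝ) : ℂ) := by push_cast; rfl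
  simp_rw [hcast]
  refine differentiableOn_tsum_of_local_bound (fun n s hs => ?_) fun ε R hε hR =>
    ⟨_, summable_mul_pow_six_mul_inv_pow_eight
      (R * C * ((1 + R ^ 2 / ε) ^ (25 / 2 : ℝ))), fun n s hs hsR => ?_⟩
  · have hmem := sq_add_mem_slitPlane hs (c := 16 * π ^ 2 * ((n : ℝ) + 1)) (by positivity)
    have hne := Complex.slitPlane_ne_zero hmem
    refine DifferentiableAt.differentiableWithinAt ?_
    refine (by fun_prop : DifferentiableAt ℂ (fun s : ℂ => s * τ (n + 1)) s).div
      ((by fun_prop : DifferentiableAt ℂ (fun s : ℂ => s ^ 2 + _) s).cpow_const hmem) ?_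
    rw [Ne, Complex.cpow_eq_zero_iff]
    exact fun h => hne h.1
  · have hn : (1 : ℝ) ≤ (n : ℝ) + 1 := by simp
    have hnc : (n : ℝ) + 1 ≤ 16 * π ^ 2 * ((n : ℝ) + 1) :=
      le_mul_of_one_le_left (by positivity) (by nlinarith [Real.pi_gt_three])
    have hle := le_norm_sq_add hε hs.le hsR.le (hn.trans hnc)
    set K := 1 + R ^ 2 / ε with hK
    have hK0 : 0 < K := by positivity
    set w := s ^ 2 + ((16 * π ^ 2 * ((n : ℝ) + 1) : ℝ) : ℂ)
    rw [norm_div, norm_mul, show ((25 : ℂ) / 2) = ((25 / 2 : ℝ) : ℂ) by norm_num,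
      Complex.norm_cpow_real, div_eq_mul_inv, ← Real.rpow_neg (norm_nonneg _)]
    have hw : ‖w‖ ^ (-(25 / 2) : ℝ) ≤ K ^ (25 / 2 : ℝ) * (((n : ℝ) + 1) ^ 8)⁻¹ := by
      have h := rpow_neg_le_inv_pow_eight hn (b := K * ‖w‖) (by
        rw [div_le_iff₀' hK0] at hle
        exact hnc.trans hle)
      rw [Real.mul_rpow hK0.le (norm_nonneg _), Real.rpow_neg hK0.le,
        inv_mul_le_iff₀ (by positivity)] at h
      exact h
    calc _ ≤ (R * (C * ((n : ℝ) + 1) ^ 6)) * (K ^ (25 / 2 : ℝ) * (((n : ℝ) + 1) ^ 8)⁻¹) := by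
          gcongr
          · exact mul_nonneg hR.le ((norm_nonneg _).trans (hC n))
          · exact hC n
      _ = _ := by ring

theorem stmt9 (τ : ℕ → ℂ) (hτ : IsRamanujanTau τ) (s : ℂ) (hs : 0 < s.re) :
    ∑' n : ℕ, τ (n + 1) * Complex.exp (-s * csqrt ((n : ℂ) + 1))
      = 2 ^ 36 * (π : ℂ) ^ ((23 : ℂ)/2) * Complex.Gamma (25/2) *
        ∑' n : ℕ, s * τ (n + 1) / (s^2 + 16 * (π : ℂ)^2 * ((n : ℂ) + 1)) ^ ((25 : ℂ)/2) := by
  exact eqOn_re_pos_of_eq_ofReal hτ.differentiableOn_tsum_exp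
    (hτ.differentiableOn_tsum_cpow.const_mul _) (fun t ht => hτ.tsum_eq_of_pos ht) hs
end

section
/- Let χ be an odd primitive Dirichlet character modulo q (q > 1), and let α, β ∈ ℂ with Re(√α) > Re(√β) > 0. Then Σ_{n=1}^∞ χ(n) e^{−(πn/√(2q))(√α+√β)} sinh((πn/√(2q))(√α−√β)) = (−i q τ(χ)(α−β)/π) Σ_{n=1}^∞ n·χ̄(n)/((2n² + αq)(2n² + βq)). -/
open scoped Real

/-- The Gauss sum of a Dirichlet character mod q. -/
noncomputable def gsum (q : ℕ) (χ : DirichletCharacter ℂ q) : ℂ :=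
  ∑ m ∈ Finset.Icc 1 q, χ (m : ZMod q) * Complex.exp (2 * (π : ℂ) * Complex.I * m / q)

theorem HasSum.int_add_neg_succ {f : ℤ → ℂ} {a : ℂ} (hf : HasSum f a) :
    HasSum (fun n : ℕ ↦ f (n + 1) + f (-(n + 1))) (a - f 0) := by
  have h := (hasSum_nat_add_iff' 1).2 hf.nat_add_neg
  simpa [← sub_sub, add_sub_assoc] using h

theorem UpperHalfPlane.summable_one_div_add_int_sub (z w : UpperHalfPlane) :
    Summable fun k : ℤ ↦ 1 / ((z : ℂ) + k) - 1 / ((w : ℂ) + k) := by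
  have h : Summable fun k : ℤ ↦ (((z : ℂ) + k) * ((w : ℂ) + k))⁻¹ := by
    apply EisensteinSeries.summable_inv_of_isBigO_rpow_inv (a := 2) (by norm_cast)
    simpa [pow_two] using (EisensteinSeries.linear_inv_isBigO_right 1 (w : ℂ)).mul
      (EisensteinSeries.linear_inv_isBigO_right 1 (z : ℂ))
  refine (h.mul_left ((w : ℂ) - z)).congr fun k ↦ ?_
  have hz := Complex.integerComplement_add_ne_zero z.coe_mem_integerComplement k
  have hw := Complex.integerComplement_add_ne_zero w.coe_mem_integerComplement k
  field_simp
  ring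

theorem UpperHalfPlane.tsum_int_one_div_add_sub (z w : UpperHalfPlane) :
    ∑' k : ℤ, (1 / ((z : ℂ) + k) - 1 / ((w : ℂ) + k)) =
      π * Complex.cot (π * z) - π * Complex.cot (π * w) := by
  have h := (summable_one_div_add_int_sub z w).hasSum.int_add_neg_succ
  have cot_hasSum (v : UpperHalfPlane) :
      HasSum (fun n : ℕ ↦ 1 / ((v : ℂ) - (n + 1)) + 1 / ((v : ℂ) + (n + 1)))
        (π * Complex.cot (π * v) - 1 / (v : ℂ)) := by
    rw [cot_series_rep' v.coe_mem_integerComplement]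
    exact (summable_cotTerm v.coe_mem_integerComplement).hasSum
  have h' := h.unique (a₂ := π * Complex.cot (π * z) - 1 / (z : ℂ) -
      (π * Complex.cot (π * w) - 1 / (w : ℂ))) <| by
    refine ((cot_hasSum z).sub (cot_hasSum w)).congr_fun fun n ↦ ?_
    push_cast
    ring
  simp only [Int.cast_zero, add_zero] at h'
  linear_combination h'

theorem UpperHalfPlane.hasSum_one_div_add_int_sub (z w : UpperHalfPlane) :
    HasSum (fun k : ℤ ↦ 1 / ((z : ℂ) + k) - 1 / ((w : ℂ) + k))
      (-(2 * π * Complex.I) * ∑' n : ℕ, (Complex.exp (2 * π * Complex.I * z) ^ (n + 1) -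
        Complex.exp (2 * π * Complex.I * w) ^ (n + 1))) := by
  convert (summable_one_div_add_int_sub z w).hasSum using 1
  have geom (v : UpperHalfPlane) : Summable fun n : ℕ ↦ Complex.exp (2 * π * Complex.I * v) ^ n :=
    summable_geometric_of_norm_lt_one (norm_exp_two_pi_I_lt_one v)
  rw [tsum_int_one_div_add_sub, pi_mul_cot_pi_q_exp, pi_mul_cot_pi_q_exp,
    ((summable_nat_add_iff 1).2 (geom z)).tsum_sub ((summable_nat_add_iff 1).2 (geom w)),
    (geom z).tsum_eq_zero_add, (geom w).tsum_eq_zero_add]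
  ring

theorem ZMod.sum_fin_natCast {M : Type*} [AddCommMonoid M] (q : ℕ) [NeZero q] (f : ZMod q → M) :
    ∑ j : Fin q, f (j : ℕ) = ∑ j : ZMod q, f j := by
  obtain ⟨m, rfl⟩ := Nat.exists_eq_succ_of_ne_zero (NeZero.ne q)
  exact Finset.sum_congr rfl fun j _ ↦ congrArg f (Fin.cast_val_eq_self j)

theorem ZMod.hasSum_mul_one_div_add_int_sub {q : ℕ} [NeZero q] (f : ZMod q → ℂ)
    (u v : UpperHalfPlane) :
    HasSum (fun n : ℤ ↦ f n * (1 / ((u : ℂ) + n) - 1 / ((v : ℂ) + n)))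
      (-(2 * π * Complex.I / q) * ∑' n : ℕ,
        (∑ j : ZMod q, f j * ZMod.stdAddChar (j * ((n + 1 : ℕ) : ZMod q))) *
        (Complex.exp (2 * π * Complex.I * u / q) ^ (n + 1) -
          Complex.exp (2 * π * Complex.I * v / q) ^ (n + 1))) := by
  have hq : (q : ℂ) ≠ 0 := NeZero.ne _
  have him (t : UpperHalfPlane) (j : Fin q) : 0 < (((t : ℂ) + (j : ℕ)) / q).im := by
    rw [← Complex.ofReal_natCast q, Complex.div_ofReal_im]
    simpa using div_pos t.im_pos (Nat.cast_pos.2 (NeZero.pos q))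
  let Z (t : UpperHalfPlane) (j : Fin q) : UpperHalfPlane := ⟨((t : ℂ) + (j : ℕ)) / q, him t j⟩
  have hZ (t : UpperHalfPlane) (j : Fin q) : (Z t j : ℂ) = ((t : ℂ) + (j : ℕ)) / q := rfl
  have hexp (t : UpperHalfPlane) (j : Fin q) (n : ℕ) :
      Complex.exp (2 * π * Complex.I * Z t j) ^ (n + 1) =
        ZMod.stdAddChar (((j : ℕ) : ZMod q) * ((n + 1 : ℕ) : ZMod q)) *
          Complex.exp (2 * π * Complex.I * t / q) ^ (n + 1) := by
    have h := ZMod.stdAddChar_coe (N := q) ((j : ℕ) * (n + 1 : ℕ) : ℤ)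
    push_cast at h ⊢
    rw [h, hZ, ← Complex.exp_nat_mul, ← Complex.exp_nat_mul, ← Complex.exp_add]
    congr 1
    push_cast
    ring
  have hgeom (t : UpperHalfPlane) (j : Fin q) :
      Summable fun n : ℕ ↦ Complex.exp (2 * π * Complex.I * Z t j) ^ (n + 1) :=
    (summable_nat_add_iff 1).2 <|
      summable_geometric_of_norm_lt_one (UpperHalfPlane.norm_exp_two_pi_I_lt_one _)
  have hterm (j : Fin q) : HasSum (fun k : ℤ ↦ f ((k * q + (j : ℕ) : ℤ) : ZMod q) *
      (1 / ((u : ℂ) + ((k * q + (j : ℕ) : ℤ) : ℂ)) - 1 / ((v : ℂ) + ((k * q + (j : ℕ) : ℤ) : ℂ))))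
      (f (j : ℕ) * ((q : ℂ)⁻¹ * (-(2 * π * Complex.I) *
        ∑' n : ℕ, (Complex.exp (2 * π * Complex.I * Z u j) ^ (n + 1) -
          Complex.exp (2 * π * Complex.I * Z v j) ^ (n + 1))))) := by
    refine (((UpperHalfPlane.hasSum_one_div_add_int_sub (Z u j) (Z v j)).mul_left
      (q : ℂ)⁻¹).mul_left (f (j : ℕ))).congr_fun fun k ↦ ?_
    have scale (t : ℂ) : 1 / (t + ((k * q + (j : ℕ) : ℤ) : ℂ)) =
        (q : ℂ)⁻¹ * (1 / ((t + (j : ℕ)) / q + k)) := by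
      rw [show t + ((k * q + (j : ℕ) : ℤ) : ℂ) = q * ((t + (j : ℕ)) / q + k) by
        push_cast; field_simp; ring]
      simp [mul_comm]
    rw [hZ, hZ, scale, scale]
    push_cast
    simp [mul_sub]
  have hsummable : Summable fun n : ℤ ↦ f n * (1 / ((u : ℂ) + n) - 1 / ((v : ℂ) + n)) := by
    refine .of_norm_bounded
      ((UpperHalfPlane.summable_one_div_add_int_sub u v).norm.mul_left (∑ j, ‖f j‖)) fun n ↦ ?_
    rw [norm_mul]
    gcongr
    exact Finset.single_le_sum (f := fun j ↦ ‖f j‖) (fun _ _ ↦ norm_nonneg _) (Finset.mem_univ _)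
  have hsum := (Equiv.prodComm _ _).hasSum_iff.2 <|
    (Int.divModEquiv q).symm.hasSum_iff.2 hsummable.hasSum
  convert hsummable.hasSum using 1
  rw [(hsum.prod_fiberwise hterm).unique (hasSum_fintype _)]
  simp_rw [← ZMod.sum_fin_natCast, Finset.sum_mul]
  rw [Summable.tsum_finsetSum, Finset.mul_sum]
  · refine Finset.sum_congr rfl fun j _ ↦ ?_
    simp_rw [hexp, ← mul_sub, mul_assoc, tsum_mul_left]
    ring
  · intro j _
    refine (((hgeom u j).sub (hgeom v j)).mul_left (f (j : ℕ))).congr fun n ↦ ?_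
    rw [hexp, hexp]
    ring

theorem gsum_eq_gaussSum {q : ℕ} [NeZero q] (χ : DirichletCharacter ℂ q) :
    gsum q χ = gaussSum χ ZMod.stdAddChar := by
  have h (m : ℕ) : χ (m : ZMod q) * Complex.exp (2 * (π : ℂ) * Complex.I * m / q) =
      χ (m : ZMod q) * ZMod.stdAddChar (m : ZMod q) := by
    simpa using congrArg (χ (m : ZMod q) * ·) (ZMod.stdAddChar_coe (N := q) m).symm
  rw [gsum, gaussSum, ← Equiv.sum_comp (Equiv.addRight (1 : ZMod q)), ← ZMod.sum_fin_natCast,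
    Finset.sum_congr rfl fun m _ ↦ h m, ← Finset.Ico_add_one_right_eq_Icc,
    Finset.sum_Ico_eq_sum_range, Fin.sum_univ_eq_sum_range
      (fun i ↦ χ (Equiv.addRight (1 : ZMod q) (i : ZMod q)) *
        ZMod.stdAddChar (Equiv.addRight (1 : ZMod q) (i : ZMod q)))]
  simp [add_comm]

theorem DirichletCharacter.IsPrimitive.gaussSum_mul_sum_inv_mul_stdAddChar {q : ℕ} [NeZero q]
    {χ : DirichletCharacter ℂ q} (hχ : χ.IsPrimitive) (n : ZMod q) :
    gaussSum χ ZMod.stdAddChar * ∑ j, χ⁻¹ j * ZMod.stdAddChar (j * n) = χ (-1) * q * χ n := by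
  have h := congrFun (ZMod.dft_dft (χ : ZMod q → ℂ)) n
  rw [ZMod.dft_apply, ← Equiv.sum_comp (Equiv.neg (ZMod q))] at h
  simp only [Equiv.neg_apply, hχ.fourierTransform_eq_inv_mul_gaussSum, neg_neg, neg_mul,
    smul_eq_mul] at h
  rw [Finset.mul_sum, mul_right_comm, ← map_mul, neg_one_mul, mul_comm (χ (-n)), ← h]
  exact Finset.sum_congr rfl fun j _ ↦ by ring

theorem csqrt_sq (z : ℂ) : csqrt z ^ 2 = z := by
  rw [csqrt, one_div]
  exact_mod_cast Complex.cpow_nat_inv_pow z two_ne_zero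

theorem csqrt_ofReal {x : ℝ} (hx : 0 ≤ x) : csqrt x = (√x : ℝ) := by
  rw [csqrt, Real.sqrt_eq_rpow, Complex.ofReal_cpow hx]
  norm_num

theorem stmt11 (q : ℕ) (hq : 1 < q) (χ : DirichletCharacter ℂ q)
    (hprim : χ.IsPrimitive) (hodd : χ (-1) = -1) (α β : ℂ)
    (hαβ : (csqrt β).re < (csqrt α).re) (hβ : 0 < (csqrt β).re) :
    ∑' n : ℕ, χ ((n + 1 : ℕ) : ZMod q) *
        Complex.exp (-((π : ℂ) * ((n : ℂ) + 1) / csqrt (2 * q)) * (csqrt α + csqrt β)) *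
        Complex.sinh ((π : ℂ) * ((n : ℂ) + 1) / csqrt (2 * q) * (csqrt α - csqrt β))
      = -Complex.I * q * gsum q χ * (α - β) / (π : ℂ) *
        ∑' n : ℕ, ((n : ℂ) + 1) * (starRingEnd ℂ) (χ ((n + 1 : ℕ) : ZMod q)) /
          ((2 * ((n : ℂ) + 1)^2 + α * q) * (2 * ((n : ℂ) + 1)^2 + β * q)) := by
  have : NeZero q := ⟨by omega⟩
  have : Fact (1 < q) := ⟨hq⟩
  have hqC : (q : ℂ) ≠ 0 := NeZero.ne _
  set a := csqrt α
  set b := csqrt β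
  have hα : α = a ^ 2 := (csqrt_sq α).symm
  have hβ' : β = b ^ 2 := (csqrt_sq β).symm
  obtain ⟨s, hs, hsq⟩ : ∃ s : ℝ, 0 < s ∧ csqrt (2 * q) = s := by
    refine ⟨√(2 * q), by positivity, ?_⟩
    rw [← csqrt_ofReal (by positivity)]
    push_cast
    rfl
  have hs2 : (s : ℂ) ^ 2 = 2 * q := by rw [← hsq, csqrt_sq]
  have hs0 : (s : ℂ) ≠ 0 := Complex.ofReal_ne_zero.2 hs.ne'
  have exists_point {c : ℂ} (hc : 0 < c.re) :
      ∃ t : UpperHalfPlane, (t : ℂ) = Complex.I * (q / s * c) := by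
    refine ⟨⟨Complex.I * (((q / s : ℝ) : ℂ) * c), ?_⟩, ?_⟩
    · rw [Complex.I_mul_im, Complex.re_ofReal_mul]
      positivity
    · change Complex.I * (((q / s : ℝ) : ℂ) * c) = _
      push_cast
      rfl
  obtain ⟨u, hu⟩ := exists_point hβ
  obtain ⟨v, hv⟩ := exists_point (hβ.trans hαβ)
  have two_mul_sq {t c : ℂ} (ht : t = Complex.I * (q / s * c)) : 2 * t ^ 2 = -(q * c ^ 2) := by
    rw [ht, mul_pow, Complex.I_sq, mul_pow, div_pow, hs2]
    field_simp
  have hden {t c : ℂ} (ht : t = Complex.I * (q / s * c)) (n : ℕ) :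
      2 * ((n : ℂ) + 1) ^ 2 + c ^ 2 * q = 2 * (t + (n + 1)) * ((n + 1) - t) := by
    linear_combination two_mul_sq ht
  have hadd (t : UpperHalfPlane) (n : ℕ) : (t : ℂ) + (n + 1) ≠ 0 := by
    simpa using Complex.integerComplement_add_ne_zero t.coe_mem_integerComplement (n + 1)
  have hsub (t : UpperHalfPlane) (n : ℕ) : (n + 1 : ℂ) - t ≠ 0 := by
    have h := Complex.integerComplement_add_ne_zero t.coe_mem_integerComplement (-(n + 1))
    contrapose! h
    push_cast
    linear_combination -h
  have hexp {t c : ℂ} (ht : t = Complex.I * (q / s * c)) (n : ℕ) :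
      Complex.exp (2 * π * Complex.I * t / q) ^ (n + 1) =
        Complex.exp (-(2 * π * (n + 1) / s * c)) := by
    rw [← Complex.exp_nat_mul, ht]
    congr 1
    push_cast
    field_simp
    linear_combination c * Complex.I_sq
  have hpoisson :=
    (ZMod.hasSum_mul_one_div_add_int_sub (χ⁻¹ : DirichletCharacter ℂ q)
      u v).int_add_neg_succ.tsum_eq
  have hinv (n : ℕ) : χ⁻¹ (-((n : ZMod q) + 1)) = -χ⁻¹ ((n : ZMod q) + 1) := by
    rw [← neg_one_mul, map_mul, MulChar.inv_apply_eq_inv', hodd]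
    norm_num
  have hconj (n : ℕ) : (starRingEnd ℂ) (χ ((n + 1 : ℕ) : ZMod q)) = χ⁻¹ ((n : ZMod q) + 1) := by
    rw [starRingEnd_apply, MulChar.star_apply']
    push_cast
    rfl
  have hgauss (n : ℕ) : gsum q χ * ∑ j, χ⁻¹ j * ZMod.stdAddChar (j * ((n + 1 : ℕ) : ZMod q)) =
      -q * χ ((n + 1 : ℕ) : ZMod q) := by
    rw [gsum_eq_gaussSum, hprim.gaussSum_mul_sum_inv_mul_stdAddChar, hodd, neg_one_mul]
  have hrat (n : ℕ) : χ⁻¹ (((n : ℤ) + 1 : ℤ) : ZMod q) *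
        (1 / ((u : ℂ) + (((n : ℤ) + 1 : ℤ) : ℂ)) - 1 / ((v : ℂ) + (((n : ℤ) + 1 : ℤ) : ℂ))) +
      χ⁻¹ ((-((n : ℤ) + 1) : ℤ) : ZMod q) *
        (1 / ((u : ℂ) + ((-((n : ℤ) + 1) : ℤ) : ℂ)) - 1 / ((v : ℂ) + ((-((n : ℤ) + 1) : ℤ) : ℂ))) =
      4 * q * (α - β) * (((n : ℂ) + 1) * (starRingEnd ℂ) (χ ((n + 1 : ℕ) : ZMod q)) /
        ((2 * ((n : ℂ) + 1) ^ 2 + α * q) * (2 * ((n : ℂ) + 1) ^ 2 + β * q))) := by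
    have hu_add := hadd u n
    have hu_sub := hsub u n
    have hv_add := hadd v n
    have hv_sub := hsub v n
    have hnum : 4 * (q : ℂ) * (a ^ 2 - b ^ 2) = 8 * ((u : ℂ) ^ 2 - (v : ℂ) ^ 2) := by
      linear_combination 4 * two_mul_sq hv - 4 * two_mul_sq hu
    have hneg (t : ℂ) : t + ((-((n : ℤ) + 1) : ℤ) : ℂ) = -((n + 1) - t) := by
      push_cast
      ring
    rw [hconj, hα, hβ', hden hv, hden hu, hnum, hneg, hneg]
    push_cast
    rw [hinv]
    field_simp
    ring
  have hterm (n : ℕ) : χ ((n + 1 : ℕ) : ZMod q) *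
        Complex.exp (-((π : ℂ) * ((n : ℂ) + 1) / csqrt (2 * q)) * (a + b)) *
        Complex.sinh ((π : ℂ) * ((n : ℂ) + 1) / csqrt (2 * q) * (a - b)) =
      -gsum q χ / (2 * q) *
        ((∑ j, χ⁻¹ j * ZMod.stdAddChar (j * ((n + 1 : ℕ) : ZMod q))) *
        (Complex.exp (2 * π * Complex.I * u / q) ^ (n + 1) -
          Complex.exp (2 * π * Complex.I * v / q) ^ (n + 1))) := by
    have hsinh (x : ℂ) : Complex.exp (-x * (a + b)) * Complex.sinh (x * (a - b)) =
        (Complex.exp (-(2 * x * b)) - Complex.exp (-(2 * x * a))) / 2 := by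
      rw [Complex.sinh, mul_div_assoc', mul_sub, ← Complex.exp_add, ← Complex.exp_add]
      ring_nf
    rw [mul_assoc, hsinh, hexp hu, hexp hv, hsq, ← mul_assoc, div_mul_eq_mul_div, neg_mul,
      hgauss]
    field_simp
  have solve {R T : ℂ} (h : 4 * q * (α - β) * R = -(2 * π * Complex.I / q) * T) :
      -gsum q χ / (2 * q) * T = -Complex.I * q * gsum q χ * (α - β) / π * R := by
    field_simp at h ⊢
    linear_combination (Complex.I * gsum q χ / 2) * h - π * T * gsum q χ * Complex.I_sq
  rw [tsum_congr hrat, tsum_mul_left, Int.cast_zero, MulChar.map_zero, zero_mul, sub_zero]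
    at hpoisson
  rw [tsum_congr hterm, tsum_mul_left]
  exact solve hpoisson
end
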